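/- arXiv:2304.07428 — 5 statements merged into one kernel-verified Lean document; each statement's English description precedes it below -/
import Mathlib

section
/- Let X̂ and X be measurable spaces, p̂ a probability measure on X̂, p a probability measure on X, R ⊆ X̂ × X a measurable set, δ ∈ [0,1], and let v be a sub-probability coupling of p̂ and p over R with respect to δ such that v(X̂ × X) < 1. Let π̂ and π denote the two marginals of v, i.e. π̂(A) = v(A × X) and π(B) = v(X̂ × B); since π̂ ≤ p̂ and π ≤ p, the measures p̂ − π̂ and p − π are well defined. Define the measure v̄ on X̂ × X by v̄ := v + (1 − v(X̂ × X))⁻¹ · ((p̂ − π̂) ⊗ (p − π)), where ⊗ denotes the product measure. Then v̄ is a probability measure on X̂ × X whose first marginal equals p̂ and whose second marginal equals p; moreover v̄(E) ≥ v(E) for every measurable E ⊆ X̂ × X, and consequently v̄(R) ≥ 1 − δ. -/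
open MeasureTheory Set

/-- The completion of a sub-probability coupling `v` of `phat` and `p` to a full coupling:
`v̄ := v + (1 − v(univ))⁻¹ • ((p̂ − π̂) ⊗ (p − π))`, where `π̂` and `π` are the marginals of `v`. -/
noncomputable def fullCoupling {Xh X : Type*} [MeasurableSpace Xh] [MeasurableSpace X]
    (phat : Measure Xh) (p : Measure X) (v : Measure (Xh × X)) : Measure (Xh × X) :=
  v + (1 - v univ)⁻¹ • ((phat - v.map Prod.fst).prod (p - v.map Prod.snd))

/-!
Couplings add: if `ρ` couples `μ` with `ν` and `ρ'` couples `μ'` with `ν'`, then `ρ + ρ'` couples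
`μ + μ'` with `ν + ν'`. Now `v` couples its own marginals `π̂` and `π`, and what they leave over,
`p̂ - π̂` and `p - π`, are measures of the same mass `1 - v univ`, which are coupled by their
product divided by that mass. The completion is the sum of these two couplings.
-/

/-- `ρ` is a coupling of `μ` and `ν`, i.e. its two marginals are `μ` and `ν`. No normalization is
imposed, so that the leftover mass of a sub-probability coupling can be coupled as well. -/
structure IsCoupling {α β : Type*} [MeasurableSpace α] [MeasurableSpace β]
    (ρ : Measure (α × β)) (μ : Measure α) (ν : Measure β) : Prop where
  map_fst : ρ.map Prod.fst = μ
  map_snd : ρ.map Prod.snd = ν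

section Coupling

variable {α β : Type*} [MeasurableSpace α] [MeasurableSpace β]
  {ρ ρ' : Measure (α × β)} {μ μ' : Measure α} {ν ν' : Measure β}

theorem IsCoupling.measure_univ_eq (h : IsCoupling ρ μ ν) : ρ univ = μ univ := by
  rw [← h.map_fst, Measure.map_apply measurable_fst .univ, preimage_univ]

theorem IsCoupling.add (h : IsCoupling ρ μ ν) (h' : IsCoupling ρ' μ' ν') :
    IsCoupling (ρ + ρ') (μ + μ') (ν + ν') where
  map_fst := by rw [Measure.map_add _ _ measurable_fst, h.map_fst, h'.map_fst]
  map_snd := by rw [Measure.map_add _ _ measurable_snd, h.map_snd, h'.map_snd]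

theorem isCoupling_marginals (ρ : Measure (α × β)) :
    IsCoupling ρ (ρ.map Prod.fst) (ρ.map Prod.snd) :=
  ⟨rfl, rfl⟩

theorem isCoupling_inv_smul_prod [IsFiniteMeasure ν] (hmass : μ univ = ν univ) (hμ : μ univ ≠ 0) :
    IsCoupling ((μ univ)⁻¹ • μ.prod ν) μ ν := by
  have hcancel : (μ univ)⁻¹ * μ univ = 1 :=
    ENNReal.inv_mul_cancel hμ (hmass ▸ measure_ne_top ν univ)
  constructor
  · rw [Measure.map_smul, Measure.map_fst_prod, ← hmass, smul_smul, hcancel, one_smul]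
  · rw [Measure.map_smul, Measure.map_snd_prod, smul_smul, hcancel, one_smul]

theorem map_fst_le_iff :
    ρ.map Prod.fst ≤ μ ↔ ∀ A, MeasurableSet A → ρ (A ×ˢ (univ : Set β)) ≤ μ A := by
  simp +contextual only [Measure.le_iff, Measure.map_apply measurable_fst, prod_univ]

theorem map_snd_le_iff :
    ρ.map Prod.snd ≤ ν ↔ ∀ B, MeasurableSet B → ρ ((univ : Set α) ×ˢ B) ≤ ν B := by
  simp +contextual only [Measure.le_iff, Measure.map_apply measurable_snd, univ_prod]

theorem sub_map_apply_univ {κ : Measure α} [IsFiniteMeasure κ] {f : α → β} (hf : Measurable f)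
    (hle : κ.map f ≤ ν) : (ν - κ.map f) univ = ν univ - κ univ := by
  rw [Measure.sub_apply .univ hle, Measure.map_apply hf .univ, preimage_univ]

theorem isCoupling_add_inv_smul_prod_sub [IsFiniteMeasure ν] (hmass : μ univ = ν univ)
    (hfst : ρ.map Prod.fst ≤ μ) (hsnd : ρ.map Prod.snd ≤ ν) (hlt : ρ univ < μ univ) :
    IsCoupling (ρ + (μ univ - ρ univ)⁻¹ • (μ - ρ.map Prod.fst).prod (ν - ρ.map Prod.snd)) μ ν := by
  have : IsFiniteMeasure ρ := ⟨hlt.trans_le le_top⟩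
  have hμ_sub : (μ - ρ.map Prod.fst) univ = μ univ - ρ univ :=
    sub_map_apply_univ measurable_fst hfst
  have hν_sub : (ν - ρ.map Prod.snd) univ = μ univ - ρ univ := by
    rw [sub_map_apply_univ measurable_snd hsnd, hmass]
  have hresidual : IsCoupling
      ((μ univ - ρ univ)⁻¹ • (μ - ρ.map Prod.fst).prod (ν - ρ.map Prod.snd))
      (μ - ρ.map Prod.fst) (ν - ρ.map Prod.snd) := by
    rw [← hμ_sub]
    exact isCoupling_inv_smul_prod (hμ_sub.trans hν_sub.symm) (hμ_sub ▸ (tsub_pos_of_lt hlt).ne')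
  have hsum := (isCoupling_marginals ρ).add hresidual
  rwa [add_comm (ρ.map _), add_comm (ρ.map _), Measure.sub_add_cancel_of_le hfst,
    Measure.sub_add_cancel_of_le hsnd] at hsum

end Coupling

section FullCoupling

variable {Xh X : Type*} [MeasurableSpace Xh] [MeasurableSpace X]

theorem le_fullCoupling (phat : Measure Xh) (p : Measure X) (v : Measure (Xh × X)) :
    v ≤ fullCoupling phat p v :=
  Measure.le_add_right le_rfl

theorem isCoupling_fullCoupling {phat : Measure Xh} {p : Measure X}
    [IsProbabilityMeasure phat] [IsProbabilityMeasure p] {v : Measure (Xh × X)}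
    (hfst : v.map Prod.fst ≤ phat) (hsnd : v.map Prod.snd ≤ p) (hlt : v univ < 1) :
    IsCoupling (fullCoupling phat p v) phat p := by
  have hphat : phat univ = 1 := measure_univ
  rw [fullCoupling, ← hphat]
  exact isCoupling_add_inv_smul_prod_sub (hphat.trans measure_univ.symm) hfst hsnd (by rwa [hphat])

end FullCoupling

/-- **Recovering a probability coupling from a sub-probability coupling.**
If `v` is a sub-probability coupling of the probability measures `phat` and `p` over the
measurable relation `R` with respect to `δ ∈ [0,1]`, and `v(univ) < 1`, then the completed
measure `v̄` is a probability measure with marginals `phat` and `p`, dominates `v`, and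
satisfies `v̄(R) ≥ 1 − δ`. -/
theorem fullCoupling_isCoupling {Xh X : Type*} [MeasurableSpace Xh] [MeasurableSpace X]
    (phat : Measure Xh) (p : Measure X)
    [IsProbabilityMeasure phat] [IsProbabilityMeasure p]
    (R : Set (Xh × X)) (hR : MeasurableSet R)
    (δ : ℝ) (hδ0 : 0 ≤ δ) (hδ1 : δ ≤ 1)
    (v : Measure (Xh × X))
    (hv1 : ENNReal.ofReal (1 - δ) ≤ v univ)
    (hv2 : v univ = v R)
    (hv3 : ∀ A : Set Xh, MeasurableSet A → v (A ×ˢ (univ : Set X)) ≤ phat A)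
    (hv4 : ∀ A : Set X, MeasurableSet A → v ((univ : Set Xh) ×ˢ A) ≤ p A)
    (hlt : v univ < 1) :
    fullCoupling phat p v univ = 1 ∧
    (fullCoupling phat p v).map Prod.fst = phat ∧
    (fullCoupling phat p v).map Prod.snd = p ∧
    (∀ E : Set (Xh × X), MeasurableSet E → v E ≤ fullCoupling phat p v E) ∧
    ENNReal.ofReal (1 - δ) ≤ fullCoupling phat p v R := by
  have hcoupling : IsCoupling (fullCoupling phat p v) phat p :=
    isCoupling_fullCoupling (map_fst_le_iff.2 hv3) (map_snd_le_iff.2 hv4) hlt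
  have hle : v ≤ fullCoupling phat p v := le_fullCoupling phat p v
  refine ⟨?_, hcoupling.map_fst, hcoupling.map_snd, fun E _ => hle E, ?_⟩
  · rw [hcoupling.measure_univ_eq, measure_univ]
  · calc
      ENNReal.ofReal (1 - δ) ≤ v univ := hv1
      _ = v R := hv2
      _ ≤ fullCoupling phat p v R := hle R
end

section
/- Let X̂ and X be standard Borel measurable spaces, p̂ a probability measure on X̂, p a probability measure on X, R ⊆ X̂ × X measurable, δ ∈ [0,1], and let v be a sub-probability coupling of p̂ and p over R with respect to δ with v(X̂ × X) < 1. Then there exists a Markov kernel s from X to X̂ such that the measure t_× on X̂ × X defined by t_×(E) := ∫_X s(x)({x̂ : (x̂, x) ∈ E}) p(dx) for measurable E ⊆ X̂ × X is a probability measure whose first marginal equals p̂ and whose second marginal equals p, and which satisfies t_×(E) ≥ v(E) for every measurable E ⊆ X̂ × X. -/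
/-!
Removing from `phat` and `p` the mass already transported by `v` leaves two residual measures of the
same total mass, and their normalized product couples them. Adding it to `v` gives a coupling of
`phat` and `p` above `v`; disintegrating this coupling along its second marginal yields the kernel.
-/

open MeasureTheory Set ProbabilityTheory

section Coupling

variable {α β : Type*} [MeasurableSpace α] [MeasurableSpace β]

theorem inv_measure_univ_smul_smul_self (μ : Measure α) [IsFiniteMeasure μ] :
    (μ univ)⁻¹ • μ univ • μ = μ := by
  rcases eq_or_ne μ 0 with rfl | hμ
  · simp
  · rw [smul_smul, ENNReal.inv_mul_cancel (Measure.measure_univ_ne_zero.2 hμ)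
      (measure_ne_top μ univ), one_smul]

/-- The product of two measures scaled by the inverse of the mass of the first factor: the
independent coupling of two finite measures of the same mass. When the masses vanish, the factor
`0⁻¹ = ⊤` is harmless because it multiplies the zero measure. -/
noncomputable def normalizedProd (μ : Measure α) (ν : Measure β) : Measure (α × β) :=
  (μ univ)⁻¹ • μ.prod ν

theorem fst_normalizedProd (μ : Measure α) (ν : Measure β) [IsFiniteMeasure μ] [IsFiniteMeasure ν]
    (h : μ univ = ν univ) : (normalizedProd μ ν).fst = μ := by
  rw [normalizedProd, Measure.fst, Measure.map_smul, Measure.map_fst_prod, ← h,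
    inv_measure_univ_smul_smul_self]

theorem snd_normalizedProd (μ : Measure α) (ν : Measure β) [IsFiniteMeasure μ] [IsFiniteMeasure ν]
    (h : μ univ = ν univ) : (normalizedProd μ ν).snd = ν := by
  rw [normalizedProd, Measure.snd, Measure.map_smul, Measure.map_snd_prod, h,
    inv_measure_univ_smul_smul_self]

/-- The completion of a partial coupling `v`, whose marginals are dominated by `μ` and `ν`, to a
coupling of `μ` and `ν`: the mass of `μ` and `ν` not transported by `v` is coupled independently. -/
noncomputable def couplingCompletion (μ : Measure α) (ν : Measure β) (v : Measure (α × β)) :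
    Measure (α × β) :=
  v + normalizedProd (μ - v.fst) (ν - v.snd)

theorem le_couplingCompletion (μ : Measure α) (ν : Measure β) (v : Measure (α × β)) :
    v ≤ couplingCompletion μ ν v :=
  Measure.le_add_right le_rfl

theorem sub_fst_univ_eq_sub_snd_univ {μ : Measure α} {ν : Measure β} {v : Measure (α × β)}
    [IsFiniteMeasure v] (h : μ univ = ν univ) (hfst : v.fst ≤ μ) (hsnd : v.snd ≤ ν) :
    (μ - v.fst) univ = (ν - v.snd) univ := by
  rw [Measure.sub_apply .univ hfst, Measure.sub_apply .univ hsnd, Measure.fst_univ,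
    Measure.snd_univ, h]

theorem fst_couplingCompletion {μ : Measure α} {ν : Measure β} {v : Measure (α × β)}
    [IsFiniteMeasure μ] [IsFiniteMeasure ν] [IsFiniteMeasure v]
    (h : μ univ = ν univ) (hfst : v.fst ≤ μ) (hsnd : v.snd ≤ ν) :
    (couplingCompletion μ ν v).fst = μ := by
  rw [couplingCompletion, Measure.fst_add,
    fst_normalizedProd _ _ (sub_fst_univ_eq_sub_snd_univ h hfst hsnd), add_comm,
    Measure.sub_add_cancel_of_le hfst]

theorem snd_couplingCompletion {μ : Measure α} {ν : Measure β} {v : Measure (α × β)}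
    [IsFiniteMeasure μ] [IsFiniteMeasure ν] [IsFiniteMeasure v]
    (h : μ univ = ν univ) (hfst : v.fst ≤ μ) (hsnd : v.snd ≤ ν) :
    (couplingCompletion μ ν v).snd = ν := by
  rw [couplingCompletion, Measure.snd_add,
    snd_normalizedProd _ _ (sub_fst_univ_eq_sub_snd_univ h hfst hsnd), add_comm,
    Measure.sub_add_cancel_of_le hsnd]

theorem isFiniteMeasure_of_fst_le {μ : Measure α} [IsFiniteMeasure μ] {v : Measure (α × β)}
    (h : v.fst ≤ μ) : IsFiniteMeasure v where
  measure_univ_lt_top := Measure.fst_univ (ρ := v) ▸ (h univ).trans_lt (measure_lt_top μ univ)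

theorem exists_coupling_ge {μ : Measure α} {ν : Measure β} [IsFiniteMeasure μ] [IsFiniteMeasure ν]
    {v : Measure (α × β)} (h : μ univ = ν univ) (hfst : v.fst ≤ μ) (hsnd : v.snd ≤ ν) :
    ∃ t : Measure (α × β), t.fst = μ ∧ t.snd = ν ∧ v ≤ t := by
  have : IsFiniteMeasure v := isFiniteMeasure_of_fst_le hfst
  exact ⟨couplingCompletion μ ν v, fst_couplingCompletion h hfst hsnd,
    snd_couplingCompletion h hfst hsnd, le_couplingCompletion μ ν v⟩

theorem fst_le_of_forall_prod_univ_le {μ : Measure α} {v : Measure (α × β)}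
    (h : ∀ A : Set α, MeasurableSet A → v (A ×ˢ univ) ≤ μ A) : v.fst ≤ μ :=
  Measure.le_iff.2 fun A hA => by simpa only [Measure.fst_apply hA, prod_univ] using h A hA

theorem snd_le_of_forall_univ_prod_le {ν : Measure β} {v : Measure (α × β)}
    (h : ∀ A : Set β, MeasurableSet A → v (univ ×ˢ A) ≤ ν A) : v.snd ≤ ν :=
  Measure.le_iff.2 fun A hA => by simpa only [Measure.snd_apply hA, univ_prod] using h A hA

theorem exists_markovKernel_apply_eq_lintegral_snd [StandardBorelSpace α] [Nonempty α]
    (t : Measure (α × β)) [IsFiniteMeasure t] :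
    ∃ s : Kernel β α, IsMarkovKernel s ∧
      ∀ E : Set (α × β), MeasurableSet E → t E = ∫⁻ y, s y {x | (x, y) ∈ E} ∂t.snd := by
  refine ⟨(t.map Prod.swap).condKernel, inferInstance, fun E hE => ?_⟩
  have hE' : MeasurableSet (Prod.swap ⁻¹' E : Set (β × α)) := measurable_swap hE
  have key := Measure.lintegral_condKernel_mem (ρ := t.map Prod.swap) hE'
  rw [Measure.fst_map_swap, Measure.map_apply measurable_swap hE'] at key
  exact key.symm

end Coupling

theorem exists_valid_refinement_general {Xh X : Type*}
    [MeasurableSpace Xh] [StandardBorelSpace Xh] [Nonempty Xh] [MeasurableSpace X]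
    (phat : Measure Xh) (p : Measure X) [IsFiniteMeasure phat] [IsFiniteMeasure p]
    (hmass : phat univ = p univ) (v : Measure (Xh × X))
    (hfst : ∀ A : Set Xh, MeasurableSet A → v (A ×ˢ (univ : Set X)) ≤ phat A)
    (hsnd : ∀ A : Set X, MeasurableSet A → v ((univ : Set Xh) ×ˢ A) ≤ p A) :
    ∃ (s : Kernel X Xh), IsMarkovKernel s ∧
      ∃ t : Measure (Xh × X),
        (∀ E : Set (Xh × X), MeasurableSet E →
          t E = ∫⁻ x, s x {xh | (xh, x) ∈ E} ∂p) ∧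
        t univ = phat univ ∧
        t.map Prod.fst = phat ∧
        t.map Prod.snd = p ∧
        (∀ E : Set (Xh × X), MeasurableSet E → v E ≤ t E) := by
  obtain ⟨t, rfl, rfl, hvt⟩ := exists_coupling_ge hmass (fst_le_of_forall_prod_univ_le hfst)
    (snd_le_of_forall_univ_prod_le hsnd)
  have : IsFiniteMeasure t := isFiniteMeasure_of_fst_le le_rfl
  obtain ⟨s, hs, hts⟩ := exists_markovKernel_apply_eq_lintegral_snd t
  exact ⟨s, hs, t, hts, Measure.fst_univ.symm, rfl, rfl, fun E _ => hvt E⟩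

/-- **Existence of a valid control refinement (measure level).**
Given a sub-probability coupling `v` of probability measures `phat` (on a standard Borel
space `Xh`) and `p` (on a standard Borel space `X`) over a measurable relation `R` with
respect to `δ ∈ [0,1]`, with `v(univ) < 1`, there exists a Markov kernel `s : X → P(Xh)`
such that the measure `t` on `Xh × X` defined by
`t(E) = ∫ s(x)({x̂ : (x̂, x) ∈ E}) p(dx)` is a probability measure with first marginal
`phat` and second marginal `p`, dominating `v`. -/
theorem exists_valid_refinement {Xh X : Type*}
    [MeasurableSpace Xh] [StandardBorelSpace Xh]
    [MeasurableSpace X] [StandardBorelSpace X]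
    (phat : Measure Xh) (p : Measure X)
    [IsProbabilityMeasure phat] [IsProbabilityMeasure p]
    (R : Set (Xh × X)) (hR : MeasurableSet R)
    (δ : ℝ) (hδ0 : 0 ≤ δ) (hδ1 : δ ≤ 1)
    (v : Measure (Xh × X))
    (hv1 : ENNReal.ofReal (1 - δ) ≤ v univ)
    (hv2 : v univ = v R)
    (hv3 : ∀ A : Set Xh, MeasurableSet A → v (A ×ˢ (univ : Set X)) ≤ phat A)
    (hv4 : ∀ A : Set X, MeasurableSet A → v ((univ : Set Xh) ×ˢ A) ≤ p A)
    (hlt : v univ < 1) :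
    ∃ (s : Kernel X Xh), IsMarkovKernel s ∧
      ∃ t : Measure (Xh × X),
        (∀ E : Set (Xh × X), MeasurableSet E →
          t E = ∫⁻ x, s x {xh | (xh, x) ∈ E} ∂p) ∧
        t univ = 1 ∧
        t.map Prod.fst = phat ∧
        t.map Prod.snd = p ∧
        (∀ E : Set (Xh × X), MeasurableSet E → v E ≤ t E) := by
  have : Nonempty Xh := nonempty_of_isProbabilityMeasure phat
  simpa only [measure_univ] using exists_valid_refinement_general phat p (by simp) v hv3 hv4
end

section
/- Let X̃, X̂ and X be standard Borel measurable spaces carrying probability measures p̃, p̂ and p respectively, let Y be a metric space with metric d, and let h̃ : X̃ → Y, ĥ : X̂ → Y, h : X → Y be measurable output maps. Let ε₁, ε₂ ≥ 0 and δ₁, δ₂ ∈ [0,1] with δ₁ + δ₂ ≤ 1. Let R₁ ⊆ X̃ × X̂ and R₂ ⊆ X̂ × X be measurable sets such that d(h̃(x̃), ĥ(x̂)) ≤ ε₁ for all (x̃, x̂) ∈ R₁ and d(ĥ(x̂), h(x)) ≤ ε₂ for all (x̂, x) ∈ R₂, and assume the composed relation R := {(x̃, x) : ∃ x̂ ∈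 X̂, (x̃, x̂) ∈ R₁ and (x̂, x) ∈ R₂} is measurable. Suppose v₁ is a sub-probability coupling of p̃ and p̂ over R₁ with respect to δ₁ with v₁(X̃ × X̂) < 1, and v₂ is a sub-probability coupling of p̂ and p over R₂ with respect to δ₂ with v₂(X̂ × X) < 1. Then: (i) d(h̃(x̃), h(x)) ≤ ε₁ + ε₂ for all (x̃, x) ∈ R, and (ii) there exists a sub-probability coupling of p̃ and p over R with respect to δ₁ + δ₂. -/
open MeasureTheory Set

/-- A sub-probability coupling of probability measures `ph` on `A` and `p` on `B` over a
measurable relation `R ⊆ A × B` with respect to `δ`: a measure `v` on `A × B` such that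
`v(univ) ≥ 1 − δ`, `v(univ) = v(R)`, and whose marginals are dominated by `ph` and `p`. -/
def IsSubProbCoupling {A B : Type*} [MeasurableSpace A] [MeasurableSpace B]
    (ph : Measure A) (p : Measure B) (R : Set (A × B)) (δ : ℝ)
    (v : Measure (A × B)) : Prop :=
  ENNReal.ofReal (1 - δ) ≤ v univ ∧
  v univ = v R ∧
  (∀ S : Set A, MeasurableSet S → v (S ×ˢ (univ : Set B)) ≤ ph S) ∧
  (∀ S : Set B, MeasurableSet S → v ((univ : Set A) ×ˢ S) ≤ p S)

/-!
Disintegrate both couplings over the middle space. Their marginals there are both dominated by the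
probability measure `ph`, so their infimum, the common part, has mass at least
`(1 - δ₁) + (1 - δ₂) - 1 = 1 - (δ₁ + δ₂)`. Draw the middle point from this common part and then the
two outer points independently from the two conditional kernels. The resulting measure on triples
projects to something below each of the given couplings, so almost every triple is related on both
sides, and its projection to the outer points is the required coupling.
-/

open ProbabilityTheory
open scoped SetRel

section Measure

variable {α β γ : Type*} [MeasurableSpace α] [MeasurableSpace β] [MeasurableSpace γ]

theorem measure_add_le_inf_add_sup (μ ν : Measure α) [IsFiniteMeasure μ] [IsFiniteMeasure ν] :
    μ + ν ≤ μ ⊓ ν + μ ⊔ ν := by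
  obtain ⟨s, hs⟩ := exists_isHahnDecomposition μ ν
  have split (ρ : Measure α) : ρ.restrict s + ρ.restrict sᶜ = ρ :=
    Measure.restrict_add_restrict_compl hs.measurableSet
  have inf_ge : μ.restrict s + ν.restrict sᶜ ≤ μ ⊓ ν :=
    le_inf ((add_le_add_right hs.ge_on_compl _).trans_eq (split μ))
      ((add_le_add_left hs.le_on _).trans_eq (split ν))
  have sup_ge : ν.restrict s + μ.restrict sᶜ ≤ μ ⊔ ν :=
    (add_le_add (Measure.restrict_mono_measure le_sup_right s)
      (Measure.restrict_mono_measure le_sup_left sᶜ)).trans_eq (split _)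
  calc μ + ν = (μ.restrict s + μ.restrict sᶜ) + (ν.restrict s + ν.restrict sᶜ) := by
        rw [split, split]
    _ = (μ.restrict s + ν.restrict sᶜ) + (ν.restrict s + μ.restrict sᶜ) := by abel
    _ ≤ μ ⊓ ν + μ ⊔ ν := add_le_add inf_ge sup_ge

theorem ofReal_one_sub_add_le_inf_univ {μ ν ρ : Measure α} [IsProbabilityMeasure ρ]
    (hμρ : μ ≤ ρ) (hνρ : ν ≤ ρ) {δ₁ δ₂ : ℝ} (hμ : ENNReal.ofReal (1 - δ₁) ≤ μ univ)
    (hν : ENNReal.ofReal (1 - δ₂) ≤ ν univ) :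
    ENNReal.ofReal (1 - (δ₁ + δ₂)) ≤ (μ ⊓ ν) univ := by
  have : IsFiniteMeasure μ := isFiniteMeasure_of_le ρ hμρ
  have : IsFiniteMeasure ν := isFiniteMeasure_of_le ρ hνρ
  calc ENNReal.ofReal (1 - (δ₁ + δ₂)) = ENNReal.ofReal ((1 - δ₁) + (1 - δ₂)) - 1 := by
        rw [← ENNReal.ofReal_one, ← ENNReal.ofReal_sub _ zero_le_one]
        ring_nf
    _ ≤ (μ ⊓ ν) univ := tsub_le_iff_right.2 ?_
  calc ENNReal.ofReal ((1 - δ₁) + (1 - δ₂)) ≤ μ univ + ν univ :=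
        ENNReal.ofReal_add_le.trans (add_le_add hμ hν)
    _ ≤ (μ ⊓ ν) univ + (μ ⊔ ν) univ := measure_add_le_inf_add_sup μ ν univ
    _ ≤ (μ ⊓ ν) univ + ρ univ := add_le_add_right (sup_le hμρ hνρ univ) _
    _ = (μ ⊓ ν) univ + 1 := by rw [measure_univ (μ := ρ)]

theorem compProd_mono_left {μ ν : Measure α} [SFinite μ] [SFinite ν] (h : μ ≤ ν)
    (κ : Kernel α β) [IsSFiniteKernel κ] : μ ⊗ₘ κ ≤ ν ⊗ₘ κ := by
  refine Measure.le_iff.2 fun s hs ↦ ?_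
  rw [Measure.compProd_apply hs, Measure.compProd_apply hs]
  exact lintegral_mono' h le_rfl

theorem compProd_condKernel_le [StandardBorelSpace β] [Nonempty β] {ρ : Measure α}
    {μ : Measure (α × β)} [IsFiniteMeasure μ] (h : ρ ≤ μ.fst) : ρ ⊗ₘ μ.condKernel ≤ μ := by
  have : IsFiniteMeasure ρ := isFiniteMeasure_of_le _ h
  exact (compProd_mono_left h μ.condKernel).trans_eq (μ.disintegrate μ.condKernel)

theorem map_compProd_prod_left (ρ : Measure α) [SFinite ρ] (κ : Kernel α β) (η : Kernel α γ)
    [IsSFiniteKernel κ] [IsMarkovKernel η] :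
    (ρ ⊗ₘ (κ ×ₖ η)).map (fun q ↦ (q.1, q.2.1)) = ρ ⊗ₘ κ :=
  calc (ρ ⊗ₘ (κ ×ₖ η)).map (Prod.map id Prod.fst) = ρ ⊗ₘ (κ ×ₖ η).fst := by
        rw [Kernel.fst_eq, Measure.compProd_map measurable_fst]
    _ = ρ ⊗ₘ κ := by rw [Kernel.fst_prod]

theorem map_compProd_prod_right (ρ : Measure α) [SFinite ρ] (κ : Kernel α β) (η : Kernel α γ)
    [IsMarkovKernel κ] [IsSFiniteKernel η] :
    (ρ ⊗ₘ (κ ×ₖ η)).map (fun q ↦ (q.1, q.2.2)) = ρ ⊗ₘ η :=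
  calc (ρ ⊗ₘ (κ ×ₖ η)).map (Prod.map id Prod.snd) = ρ ⊗ₘ (κ ×ₖ η).snd := by
        rw [Kernel.snd_eq, Measure.compProd_map measurable_snd]
    _ = ρ ⊗ₘ η := by rw [Kernel.snd_prod]

theorem map_univ_eq_map_of_ae_mem {μ : Measure α} {f : α → β} (hf : AEMeasurable f μ) {s : Set β}
    (hs : ∀ᵐ x ∂μ, f x ∈ s) : μ.map f univ = μ.map f s := by
  refine le_antisymm ?_ (measure_mono (subset_univ s))
  calc μ.map f univ = μ univ := Measure.map_apply_of_aemeasurable hf MeasurableSet.univ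
    _ = μ (f ⁻¹' s) := (measure_congr (Filter.eventuallyEq_univ.2 hs)).symm
    _ ≤ μ.map f s := Measure.le_map_apply hf s

theorem exists_gluing_fst_eq_inf [StandardBorelSpace β] [StandardBorelSpace γ]
    (μ : Measure (α × β)) (ν : Measure (α × γ)) [IsFiniteMeasure μ] [IsFiniteMeasure ν] :
    ∃ π : Measure (α × β × γ), π.fst = μ.fst ⊓ ν.fst ∧
      π.map (fun q ↦ (q.1, q.2.1)) ≤ μ ∧ π.map (fun q ↦ (q.1, q.2.2)) ≤ ν := by
  rcases isEmpty_or_nonempty β with hβ | hβ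
  · exact ⟨0, by simp [Measure.eq_zero_of_isEmpty μ, Measure.zero_le], by simp,
      by simp [Measure.zero_le]⟩
  rcases isEmpty_or_nonempty γ with hγ | hγ
  · exact ⟨0, by simp [Measure.eq_zero_of_isEmpty ν, Measure.zero_le], by simp [Measure.zero_le],
      by simp⟩
  have : IsFiniteMeasure (μ.fst ⊓ ν.fst) := isFiniteMeasure_of_le _ inf_le_left
  refine ⟨(μ.fst ⊓ ν.fst) ⊗ₘ (μ.condKernel ×ₖ ν.condKernel), Measure.fst_compProd _ _, ?_, ?_⟩
  · rw [map_compProd_prod_left]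
    exact compProd_condKernel_le inf_le_left
  · rw [map_compProd_prod_right]
    exact compProd_condKernel_le inf_le_right

end Measure

namespace IsSubProbCoupling

variable {A B C : Type*} [MeasurableSpace A] [MeasurableSpace B] [MeasurableSpace C]
  {p : Measure A} {q : Measure B} {r : Measure C} {R : Set (A × B)} {δ : ℝ} {v : Measure (A × B)}

theorem iff_fst_le_snd_le :
    IsSubProbCoupling p q R δ v ↔
      ENNReal.ofReal (1 - δ) ≤ v univ ∧ v univ = v R ∧ v.fst ≤ p ∧ v.snd ≤ q := by
  simp +contextual only [IsSubProbCoupling, Measure.le_iff, Measure.fst_apply, Measure.snd_apply,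
    prod_univ, univ_prod]

theorem fst_le (hv : IsSubProbCoupling p q R δ v) : v.fst ≤ p :=
  (iff_fst_le_snd_le.1 hv).2.2.1

theorem snd_le (hv : IsSubProbCoupling p q R δ v) : v.snd ≤ q :=
  (iff_fst_le_snd_le.1 hv).2.2.2

theorem isFiniteMeasure [IsFiniteMeasure p] (hv : IsSubProbCoupling p q R δ v) :
    IsFiniteMeasure v :=
  have : IsFiniteMeasure (v.map Prod.fst) := isFiniteMeasure_of_le p hv.fst_le
  Measure.isFiniteMeasure_of_map measurable_fst.aemeasurable

theorem ae_mem [IsFiniteMeasure v] (hv : IsSubProbCoupling p q R δ v) (hR : MeasurableSet R) :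
    ∀ᵐ x ∂v, x ∈ R :=
  (ae_iff_measure_eq hR.nullMeasurableSet).2 hv.2.1.symm

theorem map_swap (hv : IsSubProbCoupling p q R δ v) :
    IsSubProbCoupling q p (Prod.swap ⁻¹' R) δ (v.map Prod.swap) := by
  have map_apply (S : Set (B × A)) : v.map Prod.swap S = v (Prod.swap ⁻¹' S) :=
    MeasurableEquiv.prodComm.map_apply S
  obtain ⟨hmass, hR, hfst, hsnd⟩ := iff_fst_le_snd_le.1 hv
  rw [iff_fst_le_snd_le, Measure.fst_map_swap, Measure.snd_map_swap, map_apply, map_apply]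
  exact ⟨hmass, hR, hsnd, hfst⟩

theorem exists_comp [StandardBorelSpace A] [StandardBorelSpace C] [IsProbabilityMeasure q]
    {R₁ : SetRel A B} {R₂ : SetRel B C} (hR₁ : MeasurableSet R₁) (hR₂ : MeasurableSet R₂)
    {δ₁ δ₂ : ℝ} {v₁ : Measure (A × B)} {v₂ : Measure (B × C)}
    (hv₁ : IsSubProbCoupling p q R₁ δ₁ v₁) (hv₂ : IsSubProbCoupling q r R₂ δ₂ v₂) :
    ∃ v, IsSubProbCoupling p r (R₁ ○ R₂) (δ₁ + δ₂) v := by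
  have hw := hv₁.map_swap
  set w := v₁.map Prod.swap
  have : IsFiniteMeasure w := hw.isFiniteMeasure
  have : IsFiniteMeasure v₂ := hv₂.isFiniteMeasure
  obtain ⟨π, hπ_fst, hπ_left, hπ_right⟩ := exists_gluing_fst_eq_inf w v₂
  have mem_comp : ∀ᵐ x ∂π, x.2 ∈ R₁ ○ R₂ := by
    have left_mem := ae_of_ae_map (by fun_prop)
      (ae_mono hπ_left (hw.ae_mem (measurable_swap hR₁)))
    have right_mem := ae_of_ae_map (by fun_prop) (ae_mono hπ_right (hv₂.ae_mem hR₂))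
    filter_upwards [left_mem, right_mem] with x h₁ h₂ using ⟨x.1, h₁, h₂⟩
  have mass : ENNReal.ofReal (1 - (δ₁ + δ₂)) ≤ π.snd univ := by
    rw [Measure.snd_univ, ← Measure.fst_univ, hπ_fst]
    refine ofReal_one_sub_add_le_inf_univ hw.fst_le hv₂.fst_le ?_ ?_
    · exact hw.1.trans_eq Measure.fst_univ.symm
    · exact hv₂.1.trans_eq Measure.fst_univ.symm
  have supported : π.snd univ = π.snd (R₁ ○ R₂) :=
    map_univ_eq_map_of_ae_mem measurable_snd.aemeasurable mem_comp
  have fst_le : π.snd.fst ≤ p :=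
    calc π.snd.fst = π.map (fun x ↦ x.2.1) := Measure.map_map measurable_fst measurable_snd
      _ = (π.map (fun x ↦ (x.1, x.2.1))).snd := (Measure.snd_map_prodMk measurable_fst).symm
      _ ≤ p := (Measure.snd_mono hπ_left).trans hw.snd_le
  have snd_le : π.snd.snd ≤ r :=
    calc π.snd.snd = π.map (fun x ↦ x.2.2) := Measure.map_map measurable_snd measurable_snd
      _ = (π.map (fun x ↦ (x.1, x.2.2))).snd := (Measure.snd_map_prodMk measurable_fst).symm
      _ ≤ r := (Measure.snd_mono hπ_right).trans hv₂.snd_le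
  exact ⟨π.snd, iff_fst_le_snd_le.2 ⟨mass, supported, fst_le, snd_le⟩⟩

end IsSubProbCoupling

theorem dist_le_add_of_mem_comp {α β γ Y : Type*} [PseudoMetricSpace Y] {f : α → Y} {g : β → Y}
    {h : γ → Y} {R₁ : SetRel α β} {R₂ : SetRel β γ} {ε₁ ε₂ : ℝ}
    (h₁ : ∀ q ∈ R₁, dist (f q.1) (g q.2) ≤ ε₁) (h₂ : ∀ q ∈ R₂, dist (g q.1) (h q.2) ≤ ε₂) :
    ∀ q ∈ R₁ ○ R₂, dist (f q.1) (h q.2) ≤ ε₁ + ε₂ := by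
  rintro q ⟨b, hb₁, hb₂⟩
  exact (dist_triangle _ (g b) _).trans (add_le_add (h₁ _ hb₁) (h₂ _ hb₂))

theorem subsim_transitive_general {Xt Xh X : Type*}
    [MeasurableSpace Xt] [StandardBorelSpace Xt] [MeasurableSpace Xh]
    [MeasurableSpace X] [StandardBorelSpace X]
    {pt : Measure Xt} {ph : Measure Xh} {p : Measure X} [IsProbabilityMeasure ph]
    {Y : Type*} [PseudoMetricSpace Y] {ht : Xt → Y} {hh : Xh → Y} {h : X → Y}
    {ε₁ ε₂ δ₁ δ₂ : ℝ} {R₁ : SetRel Xt Xh} {R₂ : SetRel Xh X}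
    (hR₁ : MeasurableSet R₁) (hR₂ : MeasurableSet R₂)
    (hout₁ : ∀ q ∈ R₁, dist (ht q.1) (hh q.2) ≤ ε₁)
    (hout₂ : ∀ q ∈ R₂, dist (hh q.1) (h q.2) ≤ ε₂)
    {v₁ : Measure (Xt × Xh)} (hv₁ : IsSubProbCoupling pt ph R₁ δ₁ v₁)
    {v₂ : Measure (Xh × X)} (hv₂ : IsSubProbCoupling ph p R₂ δ₂ v₂) :
    (∀ q ∈ R₁ ○ R₂, dist (ht q.1) (h q.2) ≤ ε₁ + ε₂) ∧
      ∃ v, IsSubProbCoupling pt p (R₁ ○ R₂) (δ₁ + δ₂) v :=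
  ⟨dist_le_add_of_mem_comp hout₁ hout₂, hv₁.exists_comp hR₁ hR₂ hv₂⟩

/-- **Transitivity of (ε,δ)-sub-simulation relations (single-transition level).**
Output closeness composes additively (ε₁ + ε₂) along the composed relation, and the
sub-probability couplings compose into one with deviation δ₁ + δ₂. -/
theorem subsim_transitive {Xt Xh X : Type*}
    [MeasurableSpace Xt] [StandardBorelSpace Xt]
    [MeasurableSpace Xh] [StandardBorelSpace Xh]
    [MeasurableSpace X] [StandardBorelSpace X]
    (pt : Measure Xt) (ph : Measure Xh) (p : Measure X)
    [IsProbabilityMeasure pt] [IsProbabilityMeasure ph] [IsProbabilityMeasure p]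
    {Y : Type*} [MetricSpace Y] [MeasurableSpace Y]
    (ht : Xt → Y) (hh : Xh → Y) (h : X → Y)
    (hht : Measurable ht) (hhh : Measurable hh) (hhm : Measurable h)
    (ε₁ ε₂ : ℝ) (hε₁ : 0 ≤ ε₁) (hε₂ : 0 ≤ ε₂)
    (δ₁ δ₂ : ℝ) (hδ₁ : 0 ≤ δ₁) (hδ₁' : δ₁ ≤ 1) (hδ₂ : 0 ≤ δ₂) (hδ₂' : δ₂ ≤ 1)
    (hδsum : δ₁ + δ₂ ≤ 1)
    (R₁ : Set (Xt × Xh)) (hR₁ : MeasurableSet R₁)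
    (R₂ : Set (Xh × X)) (hR₂ : MeasurableSet R₂)
    (hout₁ : ∀ q ∈ R₁, dist (ht q.1) (hh q.2) ≤ ε₁)
    (hout₂ : ∀ q ∈ R₂, dist (hh q.1) (h q.2) ≤ ε₂)
    (hRmeas : MeasurableSet {q : Xt × X | ∃ xh : Xh, (q.1, xh) ∈ R₁ ∧ (xh, q.2) ∈ R₂})
    (v₁ : Measure (Xt × Xh)) (hv₁ : IsSubProbCoupling pt ph R₁ δ₁ v₁)
    (hv₁lt : v₁ univ < 1)
    (v₂ : Measure (Xh × X)) (hv₂ : IsSubProbCoupling ph p R₂ δ₂ v₂)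
    (hv₂lt : v₂ univ < 1) :
    (∀ q ∈ {q : Xt × X | ∃ xh : Xh, (q.1, xh) ∈ R₁ ∧ (xh, q.2) ∈ R₂},
        dist (ht q.1) (h q.2) ≤ ε₁ + ε₂) ∧
    (∃ v : Measure (Xt × X),
        IsSubProbCoupling pt p
          {q : Xt × X | ∃ xh : Xh, (q.1, xh) ∈ R₁ ∧ (xh, q.2) ∈ R₂} (δ₁ + δ₂) v) :=
  subsim_transitive_general hR₁ hR₂ hout₁ hout₂ hv₁ hv₂
end

section
/- Let n ≥ 1, let Σ ∈ ℝ^{n×n} be symmetric positive definite and γ ∈ ℝⁿ. Then ∫_{ℝⁿ} min(g_{0,Σ}(w), g_{−γ,Σ}(w)) dw = 2 · Φ(−½ √(γᵀ Σ⁻¹ γ)), where the integral is with respect to Lebesgue measure on ℝⁿ. -/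
open Matrix MeasureTheory

/-- Density of the multivariate normal distribution `N(μ, S)` (for `S` symmetric positive
definite) with respect to Lebesgue measure on `ℝⁿ`. -/
noncomputable def gaussDensity {ι : Type*} [Fintype ι] [DecidableEq ι] (μ : ι → ℝ)
    (S : Matrix ι ι ℝ) (w : ι → ℝ) : ℝ :=
  (2 * Real.pi) ^ (-(Fintype.card ι : ℝ) / 2) * S.det ^ (-(1 : ℝ) / 2) *
    Real.exp (-(1 / 2) * ((w - μ) ⬝ᵥ (S⁻¹ *ᵥ (w - μ))))

/-- The standard normal cumulative distribution function
`Φ(ζ) = ∫_{−∞}^{ζ} (2π)^{−1/2} e^{−β²/2} dβ`. -/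
noncomputable def stdNormalCdf (ζ : ℝ) : ℝ :=
  ∫ β in Set.Iic ζ, (2 * Real.pi) ^ (-(1 : ℝ) / 2) * Real.exp (-β ^ 2 / 2)

open ProbabilityTheory WithLp
open scoped NNReal RealInnerProductSpace MatrixOrder

/-!
Write `ℓ = log (g_ν / g_μ)`, so that `∫ min(g_μ, g_ν)` is the expectation of `min(1, e^ℓ)` under
`N(μ, S)`. Because the covariances agree, the quadratic terms cancel and `ℓ` is affine; hence its
law under `N(μ, S)` is the one-dimensional Gaussian `N(-q/2, q)` with `q = (ν - μ)ᵀ S⁻¹ (ν - μ)`.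
The overlap thus depends only on `q`, and equals that of `N(0, 1)` and `N(√q, 1)`. Recentred at the
midpoint of the two means, the minimum of these densities is `x ↦ φ(|x| + √q/2)`, whose integral
consists of two tails of mass `Φ(-√q/2)`.
-/

section GaussianReal

theorem stdNormalCdf_eq_setIntegral_gaussianPDFReal (ζ : ℝ) :
    stdNormalCdf ζ = ∫ x in Set.Iic ζ, gaussianPDFReal 0 1 x := by
  have hconst : (2 * Real.pi) ^ (-(1 : ℝ) / 2) = (√(2 * Real.pi))⁻¹ := by
    rw [Real.sqrt_eq_rpow, ← Real.rpow_neg (by positivity), neg_div]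
  simp [stdNormalCdf, gaussianPDFReal, hconst]

theorem gaussianPDFReal_zero_neg (v : ℝ≥0) (x : ℝ) :
    gaussianPDFReal 0 v (-x) = gaussianPDFReal 0 v x := by
  simp [gaussianPDFReal]

theorem gaussianPDFReal_zero_le_of_sq_le {v : ℝ≥0} {x y : ℝ} (h : y ^ 2 ≤ x ^ 2) :
    gaussianPDFReal 0 v x ≤ gaussianPDFReal 0 v y := by
  simp only [gaussianPDFReal, sub_zero]
  gcongr

theorem min_gaussianPDFReal_sub_add {v : ℝ≥0} {c : ℝ} (hc : 0 ≤ c) (x : ℝ) :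
    min (gaussianPDFReal 0 v (x - c)) (gaussianPDFReal 0 v (x + c)) =
      gaussianPDFReal 0 v (|x| + c) := by
  rcases le_total 0 x with hx | hx
  · rw [abs_of_nonneg hx]
    exact min_eq_right (gaussianPDFReal_zero_le_of_sq_le (by nlinarith))
  · rw [abs_of_nonpos hx, ← gaussianPDFReal_zero_neg v (-x + c), neg_add, neg_neg,
      ← sub_eq_add_neg]
    exact min_eq_left (gaussianPDFReal_zero_le_of_sq_le (by nlinarith))

theorem integral_min_gaussianPDFReal_sub {r : ℝ} (hr : 0 ≤ r) :
    ∫ x, min (gaussianPDFReal 0 1 x) (gaussianPDFReal 0 1 (x - r)) =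
      2 * stdNormalCdf (-(1 / 2) * r) := by
  have hmid (x : ℝ) : min (gaussianPDFReal 0 1 (x + r / 2)) (gaussianPDFReal 0 1 (x + r / 2 - r)) =
      gaussianPDFReal 0 1 (|x| + r / 2) := by
    rw [← min_gaussianPDFReal_sub_add (by positivity), min_comm]
    ring_nf
  calc ∫ x, min (gaussianPDFReal 0 1 x) (gaussianPDFReal 0 1 (x - r))
      = ∫ x, gaussianPDFReal 0 1 (|x| + r / 2) := by
        rw [← integral_add_right_eq_self _ (r / 2)]
        simp_rw [hmid]
    _ = 2 * ∫ x in Set.Ioi 0, gaussianPDFReal 0 1 (x + r / 2) :=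
        integral_comp_abs (f := fun x ↦ gaussianPDFReal 0 1 (x + r / 2))
    _ = 2 * ∫ x in Set.Ioi (r / 2), gaussianPDFReal 0 1 x := by
        rw [← (measurePreserving_add_right volume (r / 2)).setIntegral_preimage_emb
          (measurableEmbedding_addRight _) _ (Set.Ioi (r / 2)), Set.preimage_add_const_Ioi,
          sub_self]
    _ = 2 * ∫ x in Set.Iic (-(r / 2)), gaussianPDFReal 0 1 x := by
        rw [← integral_comp_neg_Ioi]
        simp_rw [gaussianPDFReal_zero_neg]
    _ = 2 * stdNormalCdf (-(1 / 2) * r) := by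
        rw [stdNormalCdf_eq_setIntegral_gaussianPDFReal]
        ring_nf

theorem gaussianPDFReal_zero_one_sub (r x : ℝ) :
    gaussianPDFReal 0 1 (x - r) = gaussianPDFReal 0 1 x * Real.exp (r * x - r ^ 2 / 2) := by
  simp only [gaussianPDFReal, mul_assoc, ← Real.exp_add]
  congr 2
  push_cast
  ring

theorem map_mul_add_gaussianReal_zero_one (m : ℝ) (v : ℝ≥0) :
    (gaussianReal 0 1).map (fun x ↦ √v * x + m) = gaussianReal m v := by
  have h : (fun x ↦ √v * x + m) = (· + m) ∘ (√v * ·) := rfl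
  have hv : NNReal.mk (√v ^ 2) (sq_nonneg _) = v := NNReal.eq (Real.sq_sqrt v.coe_nonneg)
  rw [h, ← Measure.map_map (by fun_prop) (by fun_prop), gaussianReal_map_const_mul,
    gaussianReal_map_add_const, hv, mul_zero, zero_add, mul_one]

theorem integral_min_one_exp_gaussianReal (v : ℝ≥0) :
    ∫ x, min 1 (Real.exp x) ∂gaussianReal (-(v / 2)) v =
      2 * stdNormalCdf (-(1 / 2) * √v) := by
  rw [← map_mul_add_gaussianReal_zero_one, integral_map (by fun_prop) (by fun_prop),
    integral_gaussianReal_eq_integral_smul one_ne_zero,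
    ← integral_min_gaussianPDFReal_sub (Real.sqrt_nonneg _)]
  congr with x
  rw [gaussianPDFReal_zero_one_sub, smul_eq_mul, mul_min_of_nonneg _ _ (gaussianPDFReal_nonneg ..),
    mul_one, Real.sq_sqrt v.coe_nonneg, sub_eq_add_neg]

end GaussianReal

section StdGaussian

open Complex in
theorem stdGaussian_eq_withDensity (E : Type*) [NormedAddCommGroup E] [InnerProductSpace ℝ E]
    [FiniteDimensional ℝ E] [MeasurableSpace E] [BorelSpace E] :
    stdGaussian E = volume.withDensity fun x ↦ ENNReal.ofReal
      ((2 * Real.pi) ^ (-(Module.finrank ℝ E : ℝ) / 2) * Real.exp (-(1 / 2) * ‖x‖ ^ 2)) := by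
  set c : ℝ := (2 * Real.pi) ^ (-(Module.finrank ℝ E : ℝ) / 2)
  have hintegrable : Integrable fun x : E ↦ c * Real.exp (-(1 / 2) * ‖x‖ ^ 2) := by
    refine Integrable.const_mul (.of_integral_ne_zero ?_) c
    rw [GaussianFourier.integral_rexp_neg_mul_sq_norm (by norm_num)]
    positivity
  have : IsFiniteMeasure (volume.withDensity fun x : E ↦ ENNReal.ofReal
      (c * Real.exp (-(1 / 2) * ‖x‖ ^ 2))) :=
    isFiniteMeasure_withDensity_ofReal hintegrable.2
  refine Measure.ext_of_charFun (funext fun t ↦ ?_)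
  have hnormal : (c : ℂ) * (Real.pi / (1 / 2 : ℂ)) ^ (Module.finrank ℝ E / 2 : ℂ) = 1 := by
    have hbase : (Real.pi / (1 / 2 : ℂ)) = (2 * Real.pi : ℝ) := by
      push_cast
      ring
    have hexponent : (Module.finrank ℝ E / 2 : ℂ) = (Module.finrank ℝ E / 2 : ℝ) := by
      push_cast
      rfl
    rw [hbase, hexponent, ← ofReal_cpow (by positivity), ← ofReal_mul,
      ← Real.rpow_add (by positivity), neg_div, neg_add_cancel, Real.rpow_zero, ofReal_one]
  symm
  calc charFun (volume.withDensity fun x : E ↦ ENNReal.ofReal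
          (c * Real.exp (-(1 / 2) * ‖x‖ ^ 2))) t
      = ∫ x : E, c * cexp (-(1 / 2) * ‖x‖ ^ 2 + I * ⟪t, x⟫) := by
        rw [charFun_apply, integral_withDensity_eq_integral_toReal_smul (by fun_prop)
          (.of_forall fun _ ↦ ENNReal.ofReal_lt_top)]
        congr with x
        rw [ENNReal.toReal_ofReal (by positivity), real_smul, Complex.exp_add, real_inner_comm]
        push_cast
        ring_nf
    _ = cexp (-‖t‖ ^ 2 / 2) := by
        rw [integral_const_mul, GaussianFourier.integral_cexp_neg_mul_sq_norm_add (by norm_num),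
          ← mul_assoc, hnormal, one_mul, I_sq]
        ring_nf
    _ = charFun (stdGaussian E) t := (charFun_stdGaussian t).symm

end StdGaussian

section ChangeOfVariables

theorem map_withDensity_comp {α β : Type*} [MeasurableSpace α] [MeasurableSpace β]
    (μ : Measure α) {f : α → β} (hf : Measurable f) {g : β → ENNReal} (hg : Measurable g) :
    (μ.withDensity (g ∘ f)).map f = (μ.map f).withDensity g := by
  ext s hs
  rw [Measure.map_apply hf hs, withDensity_apply _ (hf hs), withDensity_apply _ hs,
    setLIntegral_map hs hg hf]
  rfl

theorem map_const_add_linearMap_addHaar {E : Type*} [NormedAddCommGroup E] [NormedSpace ℝ E]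
    [FiniteDimensional ℝ E] [MeasurableSpace E] [BorelSpace E] (μ : Measure E)
    [μ.IsAddHaarMeasure] (a : E) {L : E →ₗ[ℝ] E} (hL : LinearMap.det L ≠ 0) :
    μ.map (fun x ↦ a + L x) = ENNReal.ofReal |(LinearMap.det L)⁻¹| • μ := by
  have hcomp : (fun x ↦ a + L x) = (a + ·) ∘ L := rfl
  rw [hcomp, ← Measure.map_map (by fun_prop) L.continuous_of_finiteDimensional.measurable,
    Measure.map_linearMap_addHaar_eq_smul_addHaar μ hL, Measure.map_smul, map_add_left_eq_self]

theorem det_toEuclideanCLM {ι : Type*} [Fintype ι] [DecidableEq ι] (A : Matrix ι ι ℝ) :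
    LinearMap.det (toEuclideanCLM (𝕜 := ℝ) A : EuclideanSpace ℝ ι →ₗ[ℝ] EuclideanSpace ℝ ι) =
      A.det := by
  rw [coe_toEuclideanCLM_eq_toEuclideanLin, LinearMap.det_toLpLin]

end ChangeOfVariables

section Multivariate

variable {ι : Type*} [Fintype ι] [DecidableEq ι]

theorem continuous_gaussDensity (μ : ι → ℝ) (S : Matrix ι ι ℝ) :
    Continuous (gaussDensity μ S) := by
  unfold gaussDensity
  fun_prop

theorem gaussDensity_zero_one (x : ι → ℝ) :
    gaussDensity 0 1 x = (2 * Real.pi) ^ (-(Fintype.card ι : ℝ) / 2) *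
      Real.exp (-(1 / 2) * (x ⬝ᵥ x)) := by
  simp [gaussDensity]

theorem abs_det_mul_gaussDensity_add_mulVec (μ : ι → ℝ) {D : Matrix ι ι ℝ} (hD : IsUnit D)
    (x : ι → ℝ) :
    |D.det| * gaussDensity μ (D * Dᵀ) (μ + D *ᵥ x) = gaussDensity 0 1 x := by
  have hdet : IsUnit D.det := (isUnit_iff_isUnit_det D).1 hD
  have hnorm : |D.det| * (D * Dᵀ).det ^ (-(1 : ℝ) / 2) = 1 := by
    rw [det_mul, det_transpose, ← sq, ← sq_abs, neg_div, Real.rpow_neg (by positivity),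
      ← Real.sqrt_eq_rpow, Real.sqrt_sq (abs_nonneg _),
      mul_inv_cancel₀ (abs_ne_zero.2 hdet.ne_zero)]
  have hquad : (D *ᵥ x) ⬝ᵥ ((D * Dᵀ)⁻¹ *ᵥ (D *ᵥ x)) = x ⬝ᵥ x := by
    have hcancel : Dᵀ * ((D * Dᵀ)⁻¹ * D) = 1 := by
      rw [Matrix.mul_inv_rev, mul_assoc, nonsing_inv_mul _ hdet, mul_one,
        mul_nonsing_inv _ (by rwa [det_transpose])]
    rw [mulVec_mulVec, ← vecMul_transpose, ← dotProduct_mulVec, mulVec_mulVec, hcancel, one_mulVec]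
  rw [gaussDensity, add_sub_cancel_left, hquad, gaussDensity_zero_one]
  linear_combination ((2 * Real.pi) ^ (-(Fintype.card ι : ℝ) / 2) *
      Real.exp (-(1 / 2) * (x ⬝ᵥ x))) * hnorm

theorem stdGaussian_euclideanSpace_eq_withDensity :
    stdGaussian (EuclideanSpace ℝ ι) =
      volume.withDensity fun x ↦ ENNReal.ofReal (gaussDensity 0 1 (ofLp x)) := by
  rw [stdGaussian_eq_withDensity]
  congr with x
  rw [gaussDensity_zero_one, finrank_euclideanSpace, EuclideanSpace.real_norm_sq_eq]
  simp only [dotProduct, sq]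

theorem multivariateGaussian_eq_withDensity (μ : EuclideanSpace ℝ ι) {S : Matrix ι ι ℝ}
    (hS : S.PosDef) :
    multivariateGaussian μ S =
      volume.withDensity fun x ↦ ENNReal.ofReal (gaussDensity (ofLp μ) S (ofLp x)) := by
  set D := CFC.sqrt S
  set T : EuclideanSpace ℝ ι → EuclideanSpace ℝ ι := fun x ↦ μ + toEuclideanCLM (𝕜 := ℝ) D x
  set g : EuclideanSpace ℝ ι → ENNReal := fun x ↦ ENNReal.ofReal (gaussDensity (ofLp μ) S (ofLp x))
  have hg : Measurable g := by
    have hcont := continuous_gaussDensity (ofLp μ) S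
    fun_prop
  have hD : IsUnit D := (CFC.isUnit_sqrt_iff S hS.posSemidef.nonneg).2 hS.isUnit
  have hdet : D.det ≠ 0 := ((isUnit_iff_isUnit_det D).1 hD).ne_zero
  have hDS : D * Dᵀ = S := by
    have hsymm : Dᵀ = D := (CFC.sqrt_nonneg S).isSelfAdjoint
    rw [hsymm, CFC.sqrt_mul_sqrt_self S hS.posSemidef.nonneg]
  have hstd : stdGaussian (EuclideanSpace ℝ ι) =
      ENNReal.ofReal |D.det| • volume.withDensity (g ∘ T) := by
    rw [stdGaussian_euclideanSpace_eq_withDensity, ← withDensity_smul _ (by fun_prop)]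
    congr with x
    rw [← abs_det_mul_gaussDensity_add_mulVec (ofLp μ) hD, hDS, ENNReal.ofReal_mul (abs_nonneg _)]
    rfl
  have hT : volume.map T = ENNReal.ofReal |D.det⁻¹| • volume := by
    rw [← det_toEuclideanCLM]
    exact map_const_add_linearMap_addHaar volume μ (by rwa [det_toEuclideanCLM])
  change (stdGaussian _).map T = volume.withDensity g
  rw [hstd, Measure.map_smul, map_withDensity_comp _ (by fun_prop) hg, hT,
    withDensity_smul_measure, smul_smul, ← ENNReal.ofReal_mul (abs_nonneg _), ← abs_mul,
    mul_inv_cancel₀ hdet, abs_one, ENNReal.ofReal_one, one_smul]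

theorem map_inner_multivariateGaussian (μ a : EuclideanSpace ℝ ι) {S : Matrix ι ι ℝ}
    (hS : S.PosSemidef) :
    (multivariateGaussian μ S).map (fun x ↦ ⟪a, x⟫) =
      gaussianReal ⟪a, μ⟫ (a ⬝ᵥ S *ᵥ a).toNNReal := by
  have hvar : Var[fun x ↦ ⟪a, x⟫; multivariateGaussian μ S] = a ⬝ᵥ S *ᵥ a := by
    rw [← covariance_self (by fun_prop), ← covarianceBilin_apply_eq_cov IsGaussian.memLp_two_id,
      covarianceBilin_multivariateGaussian hS]
  have hmean : ∫ x, ⟪a, x⟫ ∂multivariateGaussian μ S = ⟪a, μ⟫ := by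
    rw [integral_inner IsGaussian.integrable_fun_id, integral_id_multivariateGaussian]
  have hmap := IsGaussian.map_eq_gaussianReal (μ := multivariateGaussian μ S) (innerSL ℝ a)
  simpa [hmean, hvar, innerSL_apply_apply] using hmap

theorem gaussDensity_nonneg {S : Matrix ι ι ℝ} (hS : S.PosSemidef) (μ w : ι → ℝ) :
    0 ≤ gaussDensity μ S w := by
  have hdet := hS.det_nonneg
  unfold gaussDensity
  positivity

/-- The logarithm of the likelihood ratio `gaussDensity ν S w / gaussDensity μ S w`, in the
closed form it takes for symmetric `S`: an affine function of `w`. -/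
noncomputable def gaussLogLikelihoodRatio (μ ν : ι → ℝ) (S : Matrix ι ι ℝ) (w : ι → ℝ) : ℝ :=
  (S⁻¹ *ᵥ (ν - μ)) ⬝ᵥ (w - μ) - (ν - μ) ⬝ᵥ (S⁻¹ *ᵥ (ν - μ)) / 2

theorem gaussDensity_mul_exp_gaussLogLikelihoodRatio {S : Matrix ι ι ℝ} (hS : S.IsSymm)
    (μ ν w : ι → ℝ) :
    gaussDensity μ S w * Real.exp (gaussLogLikelihoodRatio μ ν S w) = gaussDensity ν S w := by
  have hsymm (x y : ι → ℝ) : x ⬝ᵥ (S⁻¹ *ᵥ y) = y ⬝ᵥ (S⁻¹ *ᵥ x) := by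
    rw [dotProduct_mulVec, ← mulVec_transpose, transpose_nonsing_inv, hS.eq, dotProduct_comm]
  have hquad : (w - ν) ⬝ᵥ (S⁻¹ *ᵥ (w - ν)) = (w - μ) ⬝ᵥ (S⁻¹ *ᵥ (w - μ)) -
      2 * ((S⁻¹ *ᵥ (ν - μ)) ⬝ᵥ (w - μ)) + (ν - μ) ⬝ᵥ (S⁻¹ *ᵥ (ν - μ)) := by
    rw [← sub_sub_sub_cancel_right w ν μ, mulVec_sub, sub_dotProduct, dotProduct_sub,
      dotProduct_sub, hsymm (ν - μ) (w - μ), dotProduct_comm (S⁻¹ *ᵥ (ν - μ))]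
    ring
  rw [gaussDensity, gaussDensity, mul_assoc (_ * _), ← Real.exp_add, hquad,
    gaussLogLikelihoodRatio]
  ring_nf

theorem integral_multivariateGaussian_eq_integral_gaussDensity_mul {S : Matrix ι ι ℝ}
    (hS : S.PosDef) (μ : ι → ℝ) (f : (ι → ℝ) → ℝ) :
    ∫ x, f (ofLp x) ∂multivariateGaussian (toLp 2 μ) S = ∫ w, gaussDensity μ S w * f w := by
  have hg := continuous_gaussDensity μ S
  rw [multivariateGaussian_eq_withDensity _ hS,
    integral_withDensity_eq_integral_toReal_smul (by fun_prop)
      (.of_forall fun _ ↦ ENNReal.ofReal_lt_top),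
    ← (PiLp.volume_preserving_ofLp ι).integral_comp
      (MeasurableEquiv.toLp 2 (ι → ℝ)).symm.measurableEmbedding]
  simp_rw [ENNReal.toReal_ofReal (gaussDensity_nonneg hS.posSemidef _ _), smul_eq_mul]

theorem map_gaussLogLikelihoodRatio_multivariateGaussian {S : Matrix ι ι ℝ} (hS : S.PosDef)
    (μ ν : ι → ℝ) :
    (multivariateGaussian (toLp 2 μ) S).map (fun x ↦ gaussLogLikelihoodRatio μ ν S (ofLp x)) =
      gaussianReal (-((ν - μ) ⬝ᵥ (S⁻¹ *ᵥ (ν - μ)) / 2))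
        ((ν - μ) ⬝ᵥ (S⁻¹ *ᵥ (ν - μ))).toNNReal := by
  set q := (ν - μ) ⬝ᵥ (S⁻¹ *ᵥ (ν - μ))
  set a : EuclideanSpace ℝ ι := toLp 2 (S⁻¹ *ᵥ (ν - μ)) with ha
  have haffine : (fun x : EuclideanSpace ℝ ι ↦ gaussLogLikelihoodRatio μ ν S (ofLp x)) =
      (· + (-⟪a, toLp 2 μ⟫ - q / 2)) ∘ (⟪a, ·⟫) := by
    ext x
    simp only [gaussLogLikelihoodRatio, Function.comp_apply, a, q,
      EuclideanSpace.inner_eq_star_dotProduct, star_trivial, dotProduct_comm, sub_dotProduct]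
    ring
  have hvar : a ⬝ᵥ S *ᵥ a = q := by
    rw [ha, mulVec_mulVec, mul_nonsing_inv _ hS.det_pos.ne'.isUnit, one_mulVec, dotProduct_comm]
  rw [haffine, ← Measure.map_map (by fun_prop) (by fun_prop),
    map_inner_multivariateGaussian _ _ hS.posSemidef, gaussianReal_map_add_const, hvar]
  ring_nf

theorem gauss_min_integral_eq_cdf_general {S : Matrix ι ι ℝ} (hS : S.PosDef) (μ ν : ι → ℝ) :
    ∫ w, min (gaussDensity μ S w) (gaussDensity ν S w) =
      2 * stdNormalCdf (-(1 / 2) * √((ν - μ) ⬝ᵥ (S⁻¹ *ᵥ (ν - μ)))) := by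
  set q := (ν - μ) ⬝ᵥ (S⁻¹ *ᵥ (ν - μ))
  have hq : (q.toNNReal : ℝ) = q :=
    Real.coe_toNNReal q (hS.inv.posSemidef.dotProduct_mulVec_nonneg (ν - μ))
  have hmin (w : ι → ℝ) : min (gaussDensity μ S w) (gaussDensity ν S w) =
      gaussDensity μ S w * min 1 (Real.exp (gaussLogLikelihoodRatio μ ν S w)) := by
    rw [mul_min_of_nonneg _ _ (gaussDensity_nonneg hS.posSemidef μ w), mul_one,
      gaussDensity_mul_exp_gaussLogLikelihoodRatio (isHermitian_iff_isSymm.1 hS.isHermitian)]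
  have hmeas : Measurable fun x : EuclideanSpace ℝ ι ↦ gaussLogLikelihoodRatio μ ν S (ofLp x) := by
    unfold gaussLogLikelihoodRatio
    fun_prop
  calc ∫ w, min (gaussDensity μ S w) (gaussDensity ν S w)
      = ∫ x, min 1 (Real.exp (gaussLogLikelihoodRatio μ ν S (ofLp x)))
          ∂multivariateGaussian (toLp 2 μ) S := by
        simp_rw [hmin]
        exact (integral_multivariateGaussian_eq_integral_gaussDensity_mul hS μ _).symm
    _ = ∫ ℓ, min 1 (Real.exp ℓ) ∂gaussianReal (-(q / 2)) q.toNNReal := by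
        rw [← map_gaussLogLikelihoodRatio_multivariateGaussian hS,
          integral_map hmeas.aemeasurable (by fun_prop)]
    _ = 2 * stdNormalCdf (-(1 / 2) * √q) := by
        simpa only [hq] using integral_min_one_exp_gaussianReal q.toNNReal

end Multivariate

/-- **Overlap mass of two Gaussians with equal covariance and mean offset `γ`.**
`∫ min(g_{0,S}, g_{−γ,S}) = 2 Φ(−½ √(γᵀ S⁻¹ γ))`. -/
theorem gauss_min_integral_eq_cdf {n : ℕ} (hn : 1 ≤ n)
    (S : Matrix (Fin n) (Fin n) ℝ) (hS : S.PosDef) (γ : Fin n → ℝ) :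
    ∫ w : Fin n → ℝ, min (gaussDensity 0 S w) (gaussDensity (-γ) S w) =
      2 * stdNormalCdf (-(1 / 2) * Real.sqrt (γ ⬝ᵥ (S⁻¹ *ᵥ γ))) := by
  simpa [mulVec_neg] using gauss_min_integral_eq_cdf_general hS 0 (-γ)
end

section
/- Let m, n ≥ 1, let φ ∈ ℝᵐ, Δ ∈ ℝ^{m×n}, let Σ ∈ ℝ^{n×n} and Σ_N ∈ ℝ^{mn×mn} be symmetric positive-definite matrices, and let c ≥ 0. Write vec(Δ) ∈ ℝ^{mn} for the column-stacking of Δ and ‖·‖ for the spectral norm (operator norm induced by the Euclidean norm) on matrices and the Euclidean norm on vectors. If vec(Δ)ᵀ Σ_N⁻¹ vec(Δ) ≤ c, then φᵀ Δ Σ⁻¹ Δᵀ φ ≤ ‖φ‖² · ‖Σ⁻¹‖ · ‖Σ_N‖ · c. -/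
/-!
With `γ = Δᵀφ`, the quadratic form is `γᵀ Σ⁻¹ γ ≤ ‖Σ⁻¹‖ ‖γ‖²`, and Cauchy–Schwarz in each column of
`Δ` gives `‖γ‖² ≤ ‖φ‖² ‖vec Δ‖²`. The ellipsoid constraint controls `‖vec Δ‖²` through
`‖v‖² ≤ ‖M‖ vᵀ M⁻¹ v` for positive definite `M`. To see this, put `w = M⁻¹ v` and factor `M = Bᵀ B`:
then `‖v‖² = ‖Bᵀ (B w)‖² ≤ ‖Bᵀ‖² ‖B w‖²`, where `‖Bᵀ‖² = ‖M‖` by the C⋆-identity and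
`‖B w‖² = wᵀ M w = vᵀ M⁻¹ v`.
-/

open Matrix

/-- The spectral norm (operator norm induced by the Euclidean norms) of a real matrix. -/
noncomputable def specNorm {a b : Type*} [Fintype a] [Fintype b] [DecidableEq b]
    (M : Matrix a b ℝ) : ℝ :=
  ‖LinearMap.toContinuousLinearMap (Matrix.toEuclideanLin M)‖

/-- The Euclidean norm of a real vector. -/
noncomputable def euclNorm {ι : Type*} [Fintype ι] (x : ι → ℝ) : ℝ :=
  Real.sqrt (x ⬝ᵥ x)

/-- The column-stacking (vectorization) of an `m × n` matrix, indexed by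
(column, row) pairs: `vecOf Δ (j, i) = Δ i j`. -/
def vecOf {m n : ℕ} (Δ : Matrix (Fin m) (Fin n) ℝ) : Fin n × Fin m → ℝ :=
  fun q => Δ q.2 q.1

section EuclideanNorm

variable {ι : Type*} [Fintype ι]

theorem euclNorm_nonneg (x : ι → ℝ) : 0 ≤ euclNorm x :=
  Real.sqrt_nonneg _

theorem euclNorm_sq (x : ι → ℝ) : euclNorm x ^ 2 = x ⬝ᵥ x :=
  Real.sq_sqrt (Finset.sum_nonneg fun i _ => mul_self_nonneg (x i))

theorem norm_toLp_eq_euclNorm (x : ι → ℝ) : ‖WithLp.toLp 2 x‖ = euclNorm x := by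
  rw [norm_eq_sqrt_real_inner, EuclideanSpace.inner_toLp_toLp, star_trivial, euclNorm]

theorem abs_dotProduct_le_euclNorm_mul_euclNorm (x y : ι → ℝ) :
    |x ⬝ᵥ y| ≤ euclNorm x * euclNorm y := by
  simpa only [EuclideanSpace.inner_toLp_toLp, star_trivial, dotProduct_comm y,
    norm_toLp_eq_euclNorm] using abs_real_inner_le_norm (WithLp.toLp 2 x) (WithLp.toLp 2 y)

theorem euclNorm_vec_sq {κ : Type*} [Fintype κ] (A : Matrix ι κ ℝ) :
    euclNorm (vec A) ^ 2 = ∑ j, euclNorm (A.col j) ^ 2 := by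
  simp only [euclNorm_sq, dotProduct, Fintype.sum_prod_type, vec, col_apply]

theorem euclNorm_vecMul_sq_le {κ : Type*} [Fintype κ] (x : ι → ℝ) (A : Matrix ι κ ℝ) :
    euclNorm (x ᵥ* A) ^ 2 ≤ euclNorm x ^ 2 * euclNorm (vec A) ^ 2 :=
  calc euclNorm (x ᵥ* A) ^ 2 = ∑ j, (x ⬝ᵥ A.col j) ^ 2 := by
        simp only [euclNorm_sq, dotProduct, vecMul, col_apply, pow_two (Finset.sum _ _)]
    _ ≤ ∑ j, (euclNorm x * euclNorm (A.col j)) ^ 2 :=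
        Finset.sum_le_sum fun j _ =>
          sq_le_sq.mpr ((abs_dotProduct_le_euclNorm_mul_euclNorm x (A.col j)).trans (le_abs_self _))
    _ = euclNorm x ^ 2 * euclNorm (vec A) ^ 2 := by
        simp only [mul_pow, euclNorm_vec_sq, Finset.mul_sum]

end EuclideanNorm

section SpectralNorm

open scoped Matrix.Norms.L2Operator MatrixOrder

variable {ι κ : Type*} [Fintype ι] [Fintype κ] [DecidableEq κ]

theorem specNorm_eq_l2_opNorm (M : Matrix ι κ ℝ) : specNorm M = ‖M‖ :=
  rfl

theorem specNorm_nonneg (M : Matrix ι κ ℝ) : 0 ≤ specNorm M :=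
  norm_nonneg _

theorem euclNorm_mulVec_le (M : Matrix ι κ ℝ) (x : κ → ℝ) :
    euclNorm (M *ᵥ x) ≤ specNorm M * euclNorm x := by
  rw [← norm_toLp_eq_euclNorm, ← norm_toLp_eq_euclNorm, specNorm_eq_l2_opNorm]
  exact M.l2_opNorm_mulVec (WithLp.toLp 2 x)

theorem specNorm_transpose [DecidableEq ι] (M : Matrix ι κ ℝ) : specNorm Mᵀ = specNorm M := by
  rw [← conjTranspose_eq_transpose_of_trivial, specNorm_eq_l2_opNorm, l2_opNorm_conjTranspose,
    specNorm_eq_l2_opNorm]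

theorem specNorm_transpose_mul_self (M : Matrix ι κ ℝ) : specNorm (Mᵀ * M) = specNorm M ^ 2 := by
  rw [← conjTranspose_eq_transpose_of_trivial, specNorm_eq_l2_opNorm,
    l2_opNorm_conjTranspose_mul_self, specNorm_eq_l2_opNorm, sq]

theorem dotProduct_mulVec_self_le_specNorm_mul_euclNorm_sq (M : Matrix κ κ ℝ) (x : κ → ℝ) :
    x ⬝ᵥ (M *ᵥ x) ≤ specNorm M * euclNorm x ^ 2 :=
  calc x ⬝ᵥ (M *ᵥ x) ≤ euclNorm x * euclNorm (M *ᵥ x) :=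
        (le_abs_self _).trans (abs_dotProduct_le_euclNorm_mul_euclNorm x (M *ᵥ x))
    _ ≤ euclNorm x * (specNorm M * euclNorm x) :=
        mul_le_mul_of_nonneg_left (euclNorm_mulVec_le M x) (euclNorm_nonneg x)
    _ = specNorm M * euclNorm x ^ 2 := by ring

theorem euclNorm_mulVec_sq_le_specNorm_mul_dotProduct_mulVec {M : Matrix κ κ ℝ}
    (hM : M.PosSemidef) (x : κ → ℝ) :
    euclNorm (M *ᵥ x) ^ 2 ≤ specNorm M * (x ⬝ᵥ (M *ᵥ x)) := by
  obtain ⟨B, rfl⟩ : ∃ B : Matrix κ κ ℝ, M = Bᵀ * B :=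
    CStarAlgebra.nonneg_iff_eq_star_mul_self.mp hM.nonneg
  have quadform_eq : x ⬝ᵥ ((Bᵀ * B) *ᵥ x) = euclNorm (B *ᵥ x) ^ 2 := by
    rw [euclNorm_sq, ← mulVec_mulVec, dotProduct_mulVec, vecMul_transpose]
  calc euclNorm ((Bᵀ * B) *ᵥ x) ^ 2 = euclNorm (Bᵀ *ᵥ (B *ᵥ x)) ^ 2 := by rw [mulVec_mulVec]
    _ ≤ (specNorm Bᵀ * euclNorm (B *ᵥ x)) ^ 2 :=
        pow_le_pow_left₀ (euclNorm_nonneg _) (euclNorm_mulVec_le Bᵀ (B *ᵥ x)) 2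
    _ = specNorm (Bᵀ * B) * (x ⬝ᵥ ((Bᵀ * B) *ᵥ x)) := by
        rw [mul_pow, specNorm_transpose, specNorm_transpose_mul_self, quadform_eq]

theorem euclNorm_sq_le_specNorm_mul_dotProduct_inv_mulVec {M : Matrix κ κ ℝ}
    (hM : M.PosDef) (x : κ → ℝ) :
    euclNorm x ^ 2 ≤ specNorm M * (x ⬝ᵥ (M⁻¹ *ᵥ x)) := by
  have mulVec_inv : M *ᵥ (M⁻¹ *ᵥ x) = x := by
    rw [mulVec_mulVec, mul_nonsing_inv _ hM.det_pos.ne'.isUnit, one_mulVec]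
  simpa only [mulVec_inv, dotProduct_comm _ x] using
    euclNorm_mulVec_sq_le_specNorm_mul_dotProduct_mulVec hM.posSemidef (M⁻¹ *ᵥ x)

end SpectralNorm

theorem quadform_credible_bound_general {ι κ : Type*} [Fintype ι] [Fintype κ]
    [DecidableEq ι] [DecidableEq κ] (φ : ι → ℝ) (Δ : Matrix ι κ ℝ) (P : Matrix κ κ ℝ)
    {SN : Matrix (κ × ι) (κ × ι) ℝ} (hSN : SN.PosDef) {c : ℝ}
    (h : vec Δ ⬝ᵥ (SN⁻¹ *ᵥ vec Δ) ≤ c) :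
    φ ⬝ᵥ (Δ *ᵥ (P *ᵥ (Δᵀ *ᵥ φ))) ≤ euclNorm φ ^ 2 * specNorm P * specNorm SN * c := by
  have vec_bound : euclNorm (vec Δ) ^ 2 ≤ specNorm SN * c :=
    (euclNorm_sq_le_specNorm_mul_dotProduct_inv_mulVec hSN (vec Δ)).trans
      (mul_le_mul_of_nonneg_left h (specNorm_nonneg SN))
  calc φ ⬝ᵥ (Δ *ᵥ (P *ᵥ (Δᵀ *ᵥ φ))) = (φ ᵥ* Δ) ⬝ᵥ (P *ᵥ (φ ᵥ* Δ)) := by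
        rw [dotProduct_mulVec, mulVec_transpose]
    _ ≤ specNorm P * euclNorm (φ ᵥ* Δ) ^ 2 :=
        dotProduct_mulVec_self_le_specNorm_mul_euclNorm_sq P (φ ᵥ* Δ)
    _ ≤ specNorm P * (euclNorm φ ^ 2 * euclNorm (vec Δ) ^ 2) :=
        mul_le_mul_of_nonneg_left (euclNorm_vecMul_sq_le φ Δ) (specNorm_nonneg P)
    _ ≤ specNorm P * (euclNorm φ ^ 2 * (specNorm SN * c)) :=
        mul_le_mul_of_nonneg_left (mul_le_mul_of_nonneg_left vec_bound (sq_nonneg _))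
          (specNorm_nonneg P)
    _ = euclNorm φ ^ 2 * specNorm P * specNorm SN * c := by ring

/-- **Quadratic-form bound over the credible ellipsoid (Appendix A.4).**
If `vec(Δ)ᵀ Σ_N⁻¹ vec(Δ) ≤ c`, then
`φᵀ Δ Σ⁻¹ Δᵀ φ ≤ ‖φ‖² ‖Σ⁻¹‖ ‖Σ_N‖ c`. -/
theorem quadform_credible_bound {m n : ℕ} (hm : 1 ≤ m) (hn : 1 ≤ n)
    (φ : Fin m → ℝ) (Δ : Matrix (Fin m) (Fin n) ℝ)
    (S : Matrix (Fin n) (Fin n) ℝ) (hS : S.PosDef)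
    (SN : Matrix (Fin n × Fin m) (Fin n × Fin m) ℝ) (hSN : SN.PosDef)
    (c : ℝ) (hc : 0 ≤ c)
    (h : vecOf Δ ⬝ᵥ (SN⁻¹ *ᵥ vecOf Δ) ≤ c) :
    φ ⬝ᵥ (Δ *ᵥ (S⁻¹ *ᵥ (Δᵀ *ᵥ φ))) ≤
      euclNorm φ ^ 2 * specNorm S⁻¹ * specNorm SN * c :=
  quadform_credible_bound_general φ Δ S⁻¹ hSN h
end
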